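/- Let V∞ > 0, E₀ ∈ ℝ with E₀ + V∞²/2 > 0, and let {(Θ_ν, V_ν)}_{ν>0} be a family of solutions of the reduced self-similar Navier–Stokes system satisfying the uniform bound (B). Assume in addition that along a sequence ν_k → 0 the functions Θ_{ν_k} converge almost everywhere on (0,1) to a function Θ and V_{ν_k} converge almost everywhere to a function V. Then the limit is the explicit stationary self-similar Euler solution with negative stream function: V(x) = V∞ for every x ∈ (0,1), and Θ(x) = −√(V∞² + 2E₀) · √(x(1−x))/(1−x²) for every x ∈ (0,1); in particular Θ(x) < 0 on (0,1) and Θ²/2 = F(V;x) holds on (0,1). -/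

import Mathlib

open Set Filter MeasureTheory intervalIntegral

/-- The functional `H(V;x) = ∫ₓ¹ ((1−t²)/t²) (∫₀ᵗ (σ/(1−σ²)²) V(σ)² dσ) dt`. -/
noncomputable def Hfun (V : ℝ → ℝ) (x : ℝ) : ℝ :=
  ∫ t in x..1, ((1 - t ^ 2) / t ^ 2) * ∫ σ in (0 : ℝ)..t, (σ / (1 - σ ^ 2) ^ 2) * V σ ^ 2

/-- The functional `F(V;x) = (x/(1−x²)²)(H(V;x) + E₀(1−x))`. -/
noncomputable def Ffun (E₀ : ℝ) (V : ℝ → ℝ) (x : ℝ) : ℝ :=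
  (x / (1 - x ^ 2) ^ 2) * (Hfun V x + E₀ * (1 - x))

/-- A solution of the reduced self-similar Navier–Stokes system with viscosity `ν`, pressure
constant `E₀` and swirl `V∞` at the vortex line: `Θ ∈ C¹([0,1))`, `V ∈ C²([0,1))`,
`ν Θ' = Θ²/2 − F(V;x)` and `ν V'' = Θ V'` on `(0,1)`, `Θ(0) = V(0) = 0` and `V → V∞` as
`x → 1⁻`. -/
structure IsNSSolution (ν E₀ Vinf : ℝ) (Θ V : ℝ → ℝ) : Prop where
  hΘreg : ContDiffOn ℝ 1 Θ (Set.Ico 0 1)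
  hVreg : ContDiffOn ℝ 2 V (Set.Ico 0 1)
  hΘeq : ∀ x ∈ Set.Ioo (0 : ℝ) 1, ν * deriv Θ x = Θ x ^ 2 / 2 - Ffun E₀ V x
  hVeq : ∀ x ∈ Set.Ioo (0 : ℝ) 1, ν * deriv (deriv V) x = Θ x * deriv V x
  hΘ0 : Θ 0 = 0
  hV0 : V 0 = 0
  hV1 : Tendsto V (nhdsWithin 1 (Set.Iio 1)) (nhds Vinf)

/-- The uniform bound (B): `−√(2E₀+V∞²) √(x(1−x))/(1−x²) < Θ(x) < 0` on `(0,1)`. -/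
def BoundB (E₀ Vinf : ℝ) (Θ : ℝ → ℝ) : Prop :=
  ∀ x ∈ Set.Ioo (0 : ℝ) 1,
    -Real.sqrt (2 * E₀ + Vinf ^ 2) * Real.sqrt (x * (1 - x)) / (1 - x ^ 2) < Θ x ∧ Θ x < 0

/-- `x` lies in the support of the measure `μ`: every open neighbourhood of `x` has positive
measure. -/
def MemSupport (μ : Measure ℝ) (x : ℝ) : Prop :=
  ∀ U : Set ℝ, IsOpen U → x ∈ U → 0 < μ U

/-!
Once `Θ ≤ 0`, the equation `ν V'' = Θ V'` makes `V` nonnegative, increasing and concave, so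
`V∞ x ≤ V(x) ≤ V∞` whatever the viscosity. As a consequence `H(V; x) + E₀ (1 - x)` is concave,
vanishes at `1`, and is bounded below near `1` because `E₀ + V∞² / 2 > 0`; it is nonnegative at `0`,
as otherwise `ν Θ' = Θ² / 2 - F > 0` would make `Θ` positive right after `0`. Concavity then bounds
`F` from below on compact subsets of `(0, 1)`, uniformly in `ν`.

This lower bound forces `V'` to decay like `exp (-C / ν)`, whence `V → V∞` and `F → F(V∞; ·)`.
Finally, the difference `d` of `Θ` and the negative Euler stream function `θ` satisfies
`ν d' = (Θ + θ) / 2 * d + o(1)` with `Θ + θ` negative and bounded away from `0`, so that `d`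
relaxes to `0` within a layer of width `O(ν)`.
-/

open scoped Topology

/-! ### Differential inequalities -/

lemma mul_one_sub_mul_le_of_concaveOn {f : ℝ → ℝ} (hf : ConcaveOn ℝ (Icc 0 1) f)
    (hf0 : 0 ≤ f 0) (hf1 : 0 ≤ f 1) {t x : ℝ} (ht : t ∈ Ioo (0 : ℝ) 1) (hft : 0 ≤ f t)
    (hx : x ∈ Icc (0 : ℝ) 1) : x * (1 - x) * f t ≤ f x := by
  obtain ⟨ht0, ht1⟩ := ht
  obtain ⟨hx0, hx1⟩ := hx
  have ht1' : 0 < 1 - t := sub_pos.2 ht1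
  rcases le_total x t with hxt | htx
  · have hcomb := hf.2 (left_mem_Icc.2 zero_le_one) ⟨ht0.le, ht1.le⟩
      (sub_nonneg.2 ((div_le_one ht0).2 hxt)) (div_nonneg hx0 ht0.le) (sub_add_cancel 1 (x / t))
    simp only [smul_eq_mul, mul_zero, zero_add, div_mul_cancel₀ x ht0.ne'] at hcomb
    have hcoef : x * (1 - x) ≤ x / t := by rw [le_div_iff₀ ht0]; nlinarith [mul_nonneg hx0 hx0]
    have := mul_le_mul_of_nonneg_right hcoef hft
    have := mul_nonneg (sub_nonneg.2 ((div_le_one ht0).2 hxt)) hf0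
    linarith
  · have hcoef1 : 0 ≤ (x - t) / (1 - t) := div_nonneg (sub_nonneg.2 htx) ht1'.le
    have hcoef2 : 0 ≤ (1 - x) / (1 - t) := div_nonneg (sub_nonneg.2 hx1) ht1'.le
    have hcomb := hf.2 ⟨ht0.le, ht1.le⟩ (right_mem_Icc.2 zero_le_one) hcoef2 hcoef1
      (by field_simp; ring)
    have hpoint : (1 - x) / (1 - t) * t + (x - t) / (1 - t) * 1 = x := by field_simp; ring
    simp only [smul_eq_mul, hpoint] at hcomb
    have hcoef : x * (1 - x) ≤ (1 - x) / (1 - t) := by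
      rw [le_div_iff₀ ht1']; nlinarith [mul_nonneg hx0 (sub_nonneg.2 hx1)]
    have := mul_le_mul_of_nonneg_right hcoef hft
    have := mul_nonneg hcoef1 hf1
    linarith

lemma le_gronwallBound_of_hasDerivAt_le {f f' : ℝ → ℝ} {K ε a b : ℝ} (hab : a ≤ b)
    (hf : ∀ x ∈ Icc a b, HasDerivAt f (f' x) x)
    (hf' : ∀ x ∈ Icc a b, f' x ≤ K * f x + ε) :
    f b ≤ gronwallBound (f a) K ε (b - a) :=
  le_gronwallBound_of_liminf_deriv_right_le
    (fun x hx ↦ (hf x hx).continuousAt.continuousWithinAt)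
    (fun x hx _ hr ↦
      (hf x (Ico_subset_Icc_self hx)).hasDerivWithinAt.liminf_right_slope_le hr)
    le_rfl (fun x hx ↦ hf' x (Ico_subset_Icc_self hx)) b (right_mem_Icc.2 hab)

lemma sq_le_of_hasDerivAt_relaxation {d d' : ℝ → ℝ} {a b ν m ε : ℝ} (hab : a ≤ b) (hν : 0 < ν)
    (hm : 0 < m) (hd : ∀ x ∈ Icc a b, HasDerivAt d (d' x) x)
    (hd' : ∀ x ∈ Icc a b, ν * (d x * d' x) ≤ -m * d x ^ 2 + ε * |d x|) :
    d b ^ 2 ≤ d a ^ 2 * Real.exp (-(m * (b - a)) / ν) + (ε / m) ^ 2 := by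
  have hK : -(m / ν) ≠ 0 := by have := div_pos hm hν; linarith
  have hbound := le_gronwallBound_of_hasDerivAt_le (f := fun x ↦ d x ^ 2)
    (K := -(m / ν)) (ε := ε ^ 2 / (m * ν)) hab (fun x hx ↦ (hd x hx).fun_pow 2) (fun x hx ↦ by
      have hyoung : ε * |d x| ≤ m * d x ^ 2 / 2 + ε ^ 2 / (2 * m) := by
        have hrew : m * d x ^ 2 / 2 + ε ^ 2 / (2 * m) - ε * |d x| =
            (m * |d x| - ε) ^ 2 / (2 * m) := by
          rw [← sq_abs (d x)]; field_simp; ring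
        have : 0 ≤ (m * |d x| - ε) ^ 2 / (2 * m) := by positivity
        linarith
      have hmul : ν * (d x * d' x) ≤ -m * d x ^ 2 / 2 + ε ^ 2 / (2 * m) := by
        linarith [hd' x hx]
      have hrhs : -(m / ν) * d x ^ 2 + ε ^ 2 / (m * ν) =
          2 * (-m * d x ^ 2 / 2 + ε ^ 2 / (2 * m)) / ν := by
        field_simp
      rw [hrhs, le_div_iff₀ hν]
      linarith)
  rw [gronwallBound_of_K_ne_0 hK] at hbound
  have hexp : -(m / ν) * (b - a) = -(m * (b - a)) / ν := by ring
  have hquot : ε ^ 2 / (m * ν) / -(m / ν) = -(ε / m) ^ 2 := by field_simp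
  simp only [hexp, hquot] at hbound
  have := mul_nonneg (sq_nonneg (ε / m)) (Real.exp_pos (-(m * (b - a)) / ν)).le
  linarith

lemma tendsto_exp_neg_div_nhds_zero {ι : Type*} {l : Filter ι} {ν : ι → ℝ} {c : ℝ} (hc : 0 < c)
    (hν : ∀ i, 0 < ν i) (hν0 : Tendsto ν l (𝓝 0)) :
    Tendsto (fun i ↦ Real.exp (-c / ν i)) l (𝓝 0) := by
  have hinv : Tendsto (fun i ↦ (ν i)⁻¹) l atTop :=
    tendsto_inv_nhdsGT_zero.comp (tendsto_nhdsWithin_iff.2 ⟨hν0, .of_forall hν⟩)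
  exact Real.tendsto_exp_atBot.comp (hinv.const_mul_atTop_of_neg (neg_lt_zero.2 hc))

lemma exists_eq_mul_exp_of_hasDerivAt {f g A : ℝ → ℝ} {s : Set ℝ} (hs : IsOpen s)
    (hs' : IsPreconnected s) (hA : ∀ x ∈ s, HasDerivAt A (g x) x)
    (hf : ∀ x ∈ s, HasDerivAt f (g x * f x) x) : ∃ c, ∀ x ∈ s, f x = c * Real.exp (A x) := by
  have hder : ∀ x ∈ s, HasDerivAt (fun x ↦ f x * Real.exp (-A x)) 0 x := fun x hx ↦ by
    convert! (hf x hx).fun_mul (hA x hx).neg.exp using 1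
    simp only [Pi.neg_apply]
    ring
  obtain ⟨c, hc⟩ := hs.exists_is_const_of_deriv_eq_zero hs'
    (fun x hx ↦ (hder x hx).differentiableAt.differentiableWithinAt) fun x hx ↦ (hder x hx).deriv
  refine ⟨c, fun x hx ↦ ?_⟩
  rw [← hc x hx, mul_assoc, ← Real.exp_add, neg_add_cancel, Real.exp_zero, mul_one]

lemma hasDerivAt_integral_of_continuousOn_Ioo {f : ℝ → ℝ} {a b c x : ℝ}
    (hf : ContinuousOn f (Ioo a b)) (hc : c ∈ Ioo a b) (hx : x ∈ Ioo a b) :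
    HasDerivAt (fun y ↦ ∫ t in c..y, f t) (f x) x :=
  integral_hasDerivAt_right (hf.mono (ordConnected_Ioo.uIcc_subset hc hx)).intervalIntegrable
    (hf.stronglyMeasurableAtFilter isOpen_Ioo x hx) (hf.continuousAt (isOpen_Ioo.mem_nhds hx))

/-! ### The integrand of `H` -/

section SwirlDensity

variable {V : ℝ → ℝ} {t : ℝ}

lemma one_sub_sq_pos {x : ℝ} (hx : x ∈ Ico (0 : ℝ) 1) : 0 < 1 - x ^ 2 :=
  sub_pos.2 (pow_lt_one₀ hx.1 hx.2 two_ne_zero)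

lemma continuousOn_kernel_mul_sq (hV : ContinuousOn V (Ico 0 1)) :
    ContinuousOn (fun σ ↦ σ / (1 - σ ^ 2) ^ 2 * V σ ^ 2) (Ico 0 1) :=
  (continuousOn_id.div (by fun_prop) fun _ hx ↦ (pow_pos (one_sub_sq_pos hx) 2).ne').mul
    (hV.pow 2)

lemma intervalIntegrable_kernel_mul_sq (hV : ContinuousOn V (Ico 0 1)) (ht : t ∈ Ico (0 : ℝ) 1) :
    IntervalIntegrable (fun σ ↦ σ / (1 - σ ^ 2) ^ 2 * V σ ^ 2) volume 0 t :=
  ((continuousOn_kernel_mul_sq hV).mono (ordConnected_Ico.uIcc_subset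
    (left_mem_Ico.2 one_pos) ht)).intervalIntegrable

/-- The integrand of `H(V; ·)`, namely half the average of `V²` over `(0, t)` with respect to the
weight `σ / (1 - σ²)²`. -/
noncomputable def swirlDensity (V : ℝ → ℝ) (t : ℝ) : ℝ :=
  (1 - t ^ 2) / t ^ 2 * ∫ σ in (0 : ℝ)..t, σ / (1 - σ ^ 2) ^ 2 * V σ ^ 2

lemma hasDerivAt_one_sub_sq (x : ℝ) : HasDerivAt (fun y : ℝ ↦ 1 - y ^ 2) (-(2 * x)) x := by
  simpa using (hasDerivAt_pow 2 x).const_sub 1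

lemma swirlDensity_eq_of_hasDerivAt {Φ : ℝ → ℝ} (hV : ContinuousOn V (Ico 0 1))
    (ht : t ∈ Ico (0 : ℝ) 1)
    (hΦ : ∀ σ ∈ Ico (0 : ℝ) 1, HasDerivAt Φ (σ / (1 - σ ^ 2) ^ 2 * V σ ^ 2) σ) :
    swirlDensity V t = (1 - t ^ 2) / t ^ 2 * (Φ t - Φ 0) := by
  rw [swirlDensity, integral_eq_sub_of_hasDerivAt
    (fun σ hσ ↦ hΦ σ (ordConnected_Ico.uIcc_subset (left_mem_Ico.2 one_pos) ht hσ))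
    (intervalIntegrable_kernel_mul_sq hV ht)]

lemma swirlDensity_const (c : ℝ) (ht : t ∈ Ioo (0 : ℝ) 1) :
    swirlDensity (fun _ ↦ c) t = c ^ 2 / 2 := by
  have ht0 := ht.1.ne'
  have ht1 := (one_sub_sq_pos (Ioo_subset_Ico_self ht)).ne'
  rw [swirlDensity_eq_of_hasDerivAt (Φ := fun σ ↦ c ^ 2 / 2 * (1 - σ ^ 2)⁻¹)
    continuousOn_const (Ioo_subset_Ico_self ht)]
  · field_simp
    ring
  · intro σ hσ
    convert! ((hasDerivAt_one_sub_sq σ).fun_inv (one_sub_sq_pos hσ).ne').const_mul (c ^ 2 / 2)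
      using 1
    ring

lemma swirlDensity_const_mul_id (c : ℝ) (ht : t ∈ Ioo (0 : ℝ) 1) :
    swirlDensity (fun σ ↦ c * σ) t =
      c ^ 2 / 2 * (1 + (1 - t ^ 2) * Real.log (1 - t ^ 2) / t ^ 2) := by
  have ht0 := ht.1.ne'
  have ht1 := (one_sub_sq_pos (Ioo_subset_Ico_self ht)).ne'
  rw [swirlDensity_eq_of_hasDerivAt
    (Φ := fun σ ↦ c ^ 2 / 2 * ((1 - σ ^ 2)⁻¹ + Real.log (1 - σ ^ 2)))
    (by fun_prop) (Ioo_subset_Ico_self ht)]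
  · simp only [ne_eq, OfNat.ofNat_ne_zero, not_false_eq_true, zero_pow, sub_zero, inv_one,
      Real.log_one, add_zero]
    field_simp
    ring
  · intro σ hσ
    have hσ1 := (one_sub_sq_pos hσ).ne'
    have hsub := hasDerivAt_one_sub_sq σ
    convert! ((hsub.fun_inv hσ1).fun_add (hsub.log hσ1)).const_mul (c ^ 2 / 2) using 1
    field_simp
    ring

lemma swirlDensity_le_swirlDensity {V₁ V₂ : ℝ → ℝ} (hV₁ : ContinuousOn V₁ (Ico 0 1))
    (hV₂ : ContinuousOn V₂ (Ico 0 1)) (ht : t ∈ Ioo (0 : ℝ) 1)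
    (h : ∀ σ ∈ Icc 0 t, |V₁ σ| ≤ |V₂ σ|) : swirlDensity V₁ t ≤ swirlDensity V₂ t := by
  have hpos := one_sub_sq_pos (Ioo_subset_Ico_self ht)
  refine mul_le_mul_of_nonneg_left (integral_mono_on ht.1.le
    (intervalIntegrable_kernel_mul_sq hV₁ (Ioo_subset_Ico_self ht))
    (intervalIntegrable_kernel_mul_sq hV₂ (Ioo_subset_Ico_self ht)) fun σ hσ ↦ ?_) (by positivity)
  have := hσ.1
  exact mul_le_mul_of_nonneg_left (sq_le_sq.2 (h σ hσ)) (by positivity)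

lemma hasDerivAt_swirlDensity (hV : ContinuousOn V (Ico 0 1)) (ht : t ∈ Ioo (0 : ℝ) 1) :
    HasDerivAt (swirlDensity V) ((V t ^ 2 - 2 * swirlDensity V t) / (t * (1 - t ^ 2))) t := by
  have ht0 := ht.1.ne'
  have ht1 := (one_sub_sq_pos (Ioo_subset_Ico_self ht)).ne'
  have hcont := continuousOn_kernel_mul_sq hV
  have hint := integral_hasDerivAt_right
    (intervalIntegrable_kernel_mul_sq hV (Ioo_subset_Ico_self ht))
    ((hcont.mono Ioo_subset_Ico_self).stronglyMeasurableAtFilter isOpen_Ioo t ht)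
    (hcont.continuousAt (Ico_mem_nhds ht.1 ht.2))
  convert! ((hasDerivAt_one_sub_sq t).fun_div (hasDerivAt_pow 2 t) (pow_ne_zero 2 ht0)).mul hint
    using 1
  simp only [swirlDensity]
  field_simp
  ring

lemma continuousOn_swirlDensity (hV : ContinuousOn V (Ico 0 1)) :
    ContinuousOn (swirlDensity V) (Ioo 0 1) := fun _ ht ↦
  (hasDerivAt_swirlDensity hV ht).continuousAt.continuousWithinAt

lemma swirlDensity_nonneg (V : ℝ → ℝ) (ht : t ∈ Ioo (0 : ℝ) 1) : 0 ≤ swirlDensity V t := by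
  have hpos := one_sub_sq_pos (Ioo_subset_Ico_self ht)
  refine mul_nonneg (by positivity) (integral_nonneg ht.1.le fun σ hσ ↦ ?_)
  have := hσ.1
  positivity

end SwirlDensity

/-! ### Swirl profiles -/

/-- Swirls which increase concavely from `0` at the origin to `Vinf` at the vortex line. Up to sign,
the swirl of every solution with nonpositive stream function is of this kind, whatever the
viscosity, and this is what makes the estimates on its pressure uniform. -/
structure IsSwirlProfile (Vinf : ℝ) (V : ℝ → ℝ) : Prop where
  continuousOn : ContinuousOn V (Ico 0 1)
  concaveOn : ConcaveOn ℝ (Ico 0 1) V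
  monotoneOn : MonotoneOn V (Ico 0 1)
  map_zero : V 0 = 0
  tendsto : Tendsto V (𝓝[<] 1) (𝓝 Vinf)

namespace IsSwirlProfile

variable {Vinf : ℝ} {V : ℝ → ℝ} {x t : ℝ}

lemma nonneg (h : IsSwirlProfile Vinf V) (hx : x ∈ Ico (0 : ℝ) 1) : 0 ≤ V x :=
  h.map_zero ▸ h.monotoneOn (left_mem_Ico.2 one_pos) hx hx.1

lemma le (h : IsSwirlProfile Vinf V) (hx : x ∈ Ico (0 : ℝ) 1) : V x ≤ Vinf :=
  ge_of_tendsto h.tendsto <| by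
    filter_upwards [Ico_mem_nhdsLT hx.2] with z hz
    exact h.monotoneOn hx ⟨hx.1.trans hz.1, hz.2⟩ hz.1

lemma mul_le (h : IsSwirlProfile Vinf V) (hx : x ∈ Ico (0 : ℝ) 1) : Vinf * x ≤ V x := by
  have hlim : Tendsto (fun z ↦ x / z * V z) (𝓝[<] 1) (𝓝 (x / 1 * Vinf)) :=
    ((tendsto_const_nhds.div tendsto_id one_ne_zero).mono_left nhdsWithin_le_nhds).mul h.tendsto
  rw [div_one, mul_comm] at hlim
  refine le_of_tendsto hlim ?_
  filter_upwards [Ioo_mem_nhdsLT hx.2] with z hz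
  have hz0 := hx.1.trans_lt hz.1
  have hcomb := h.concaveOn.2 (left_mem_Ico.2 one_pos) ⟨hz0.le, hz.2⟩
    (sub_nonneg.2 ((div_le_one hz0).2 hz.1.le)) (div_nonneg hx.1 hz0.le)
    (sub_add_cancel 1 (x / z))
  simpa only [smul_eq_mul, mul_zero, zero_add, div_mul_cancel₀ x hz0.ne', h.map_zero] using hcomb

lemma deriv_le {v : ℝ} (h : IsSwirlProfile Vinf V) (hx : x ∈ Ioo (0 : ℝ) 1)
    (hv : HasDerivAt V v x) : v ≤ Vinf / x := by
  have hslope := h.concaveOn.le_slope_of_hasDerivAt (left_mem_Ico.2 one_pos)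
    (Ioo_subset_Ico_self hx) hx.1 hv
  rw [slope_def_field, h.map_zero, sub_zero, sub_zero] at hslope
  exact hslope.trans (div_le_div_of_nonneg_right (h.le (Ioo_subset_Ico_self hx)) hx.1.le)

lemma sub_le_deriv_mul {v : ℝ} (h : IsSwirlProfile Vinf V) (hx : x ∈ Ico (0 : ℝ) 1)
    (hv : HasDerivAt V v x) : Vinf - V x ≤ v * (1 - x) := by
  have hid : Tendsto (fun z : ℝ ↦ z) (𝓝[<] 1) (𝓝 1) := tendsto_id.mono_left nhdsWithin_le_nhds
  refine le_of_tendsto_of_tendsto (h.tendsto.sub_const _) ((hid.sub_const x).const_mul v) ?_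
  filter_upwards [Ioo_mem_nhdsLT hx.2] with z hz
  have hslope := h.concaveOn.slope_le_of_hasDerivAt hx ⟨hx.1.trans hz.1.le, hz.2⟩ hz.1 hv
  rwa [slope_def_field, div_le_iff₀ (sub_pos.2 hz.1)] at hslope

lemma two_mul_swirlDensity_le_sq (h : IsSwirlProfile Vinf V) (ht : t ∈ Ioo (0 : ℝ) 1) :
    2 * swirlDensity V t ≤ V t ^ 2 := by
  have hle := swirlDensity_le_swirlDensity h.continuousOn (V₂ := fun _ ↦ V t) continuousOn_const
    ht fun σ hσ ↦
      have hσ' : σ ∈ Ico (0 : ℝ) 1 := ⟨hσ.1, hσ.2.trans_lt ht.2⟩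
      abs_le_abs_of_nonneg (h.nonneg hσ')
        (h.monotoneOn hσ' (Ioo_subset_Ico_self ht) hσ.2)
  rw [swirlDensity_const _ ht] at hle
  linarith

lemma swirlDensity_le (h : IsSwirlProfile Vinf V) (ht : t ∈ Ioo (0 : ℝ) 1) :
    swirlDensity V t ≤ Vinf ^ 2 / 2 := by
  have hsq := h.two_mul_swirlDensity_le_sq ht
  have := pow_le_pow_left₀ (h.nonneg (Ioo_subset_Ico_self ht)) (h.le (Ioo_subset_Ico_self ht)) 2
  linarith

lemma intervalIntegrable_swirlDensity (h : IsSwirlProfile Vinf V) (hx : x ∈ Icc (0 : ℝ) 1) :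
    IntervalIntegrable (swirlDensity V) volume x 1 := by
  have hint : IntervalIntegrable (swirlDensity V) volume 0 1 := by
    rw [intervalIntegrable_iff_integrableOn_Ioo_of_le zero_le_one]
    refine Integrable.mono' (integrableOn_const (C := Vinf ^ 2 / 2) measure_Ioo_lt_top.ne)
      ((continuousOn_swirlDensity h.continuousOn).aestronglyMeasurable measurableSet_Ioo)
      (ae_restrict_of_forall_mem measurableSet_Ioo fun t ht ↦ ?_)
    rw [Real.norm_of_nonneg (swirlDensity_nonneg V ht)]
    exact h.swirlDensity_le ht
  exact hint.mono_set (ordConnected_uIcc.uIcc_subset (by simpa using hx) right_mem_uIcc)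

end IsSwirlProfile

/-- The factor `H(V; x) + E₀ (1 - x)` of `F(V; x)`. -/
noncomputable def pressureHead (E₀ : ℝ) (V : ℝ → ℝ) (x : ℝ) : ℝ :=
  Hfun V x + E₀ * (1 - x)

@[simp]
lemma pressureHead_one (E₀ : ℝ) (V : ℝ → ℝ) : pressureHead E₀ V 1 = 0 := by
  simp [pressureHead, Hfun]

lemma Hfun_eq_integral_swirlDensity (V : ℝ → ℝ) (x : ℝ) :
    Hfun V x = ∫ t in x..1, swirlDensity V t := rfl

lemma Hfun_const (c : ℝ) {x : ℝ} (hx : x ∈ Icc (0 : ℝ) 1) :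
    Hfun (fun _ ↦ c) x = c ^ 2 / 2 * (1 - x) := by
  rw [Hfun_eq_integral_swirlDensity, integral_of_le hx.2, integral_Ioc_eq_integral_Ioo,
    setIntegral_congr_fun (g := fun _ ↦ c ^ 2 / 2) measurableSet_Ioo fun t ht ↦
      swirlDensity_const c ⟨hx.1.trans_lt ht.1, ht.2⟩]
  simp [hx.2, mul_comm]

namespace IsSwirlProfile

variable {E₀ Vinf : ℝ} {V : ℝ → ℝ} {x : ℝ}

lemma hasDerivAt_pressureHead (h : IsSwirlProfile Vinf V) (hx : x ∈ Ioo (0 : ℝ) 1) :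
    HasDerivAt (pressureHead E₀ V) (-(swirlDensity V x + E₀)) x := by
  have hcont := continuousOn_swirlDensity h.continuousOn
  have hH : HasDerivAt (Hfun V) (-swirlDensity V x) x :=
    integral_hasDerivAt_left (h.intervalIntegrable_swirlDensity (Ioo_subset_Icc_self hx))
      (hcont.stronglyMeasurableAtFilter isOpen_Ioo x hx)
      (hcont.continuousAt (isOpen_Ioo.mem_nhds hx))
  convert! hH.fun_add (((hasDerivAt_id x).const_sub 1).const_mul E₀) using 1
  ring

lemma continuousOn_pressureHead (h : IsSwirlProfile Vinf V) :
    ContinuousOn (pressureHead E₀ V) (Icc 0 1) := by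
  have hint := h.intervalIntegrable_swirlDensity (left_mem_Icc.2 zero_le_one)
  have hH := continuousOn_primitive_interval_left ((intervalIntegrable_iff' (by simp)).1 hint)
  rw [uIcc_of_le zero_le_one] at hH
  exact hH.add (by fun_prop)

lemma concaveOn_pressureHead (h : IsSwirlProfile Vinf V) :
    ConcaveOn ℝ (Icc 0 1) (pressureHead E₀ V) := by
  refine concaveOn_of_hasDerivWithinAt2_nonpos (convex_Icc 0 1) h.continuousOn_pressureHead
    (f' := fun x ↦ -(swirlDensity V x + E₀))
    (f'' := fun x ↦ -((V x ^ 2 - 2 * swirlDensity V x) / (x * (1 - x ^ 2)))) ?_ ?_ ?_ <;>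
    rw [interior_Icc] <;> intro x hx
  · exact h.hasDerivAt_pressureHead hx |>.hasDerivWithinAt
  · exact ((hasDerivAt_swirlDensity h.continuousOn hx).add_const E₀).neg.hasDerivWithinAt
  · have := one_sub_sq_pos (Ioo_subset_Ico_self hx)
    have := hx.1
    have := sub_nonneg.2 (h.two_mul_swirlDensity_le_sq hx)
    exact neg_nonpos.2 (by positivity)

lemma Hfun_le (h : IsSwirlProfile Vinf V) (hx : x ∈ Icc (0 : ℝ) 1) :
    Hfun V x ≤ Vinf ^ 2 / 2 * (1 - x) := by
  refine (integral_mono_on_of_le_Ioo hx.2 (h.intervalIntegrable_swirlDensity hx)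
    intervalIntegrable_const fun t ht ↦ h.swirlDensity_le ⟨hx.1.trans_lt ht.1, ht.2⟩).trans_eq ?_
  rw [intervalIntegral.integral_const, smul_eq_mul, mul_comm]

lemma const_mul_sub_Hfun_le {a : ℝ} (h : IsSwirlProfile Vinf V) (ha : 0 ≤ a) (hax : a ≤ x)
    (hx : x ≤ 1) : Vinf ^ 2 / 2 * (1 - x) - Hfun V x ≤ Vinf ^ 2 / 2 * (1 - a) - Hfun V a := by
  have hinta := h.intervalIntegrable_swirlDensity ⟨ha, hax.trans hx⟩
  have hintx := h.intervalIntegrable_swirlDensity ⟨ha.trans hax, hx⟩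
  have hintax := hinta.trans hintx.symm
  have hle : ∫ t in a..x, swirlDensity V t ≤ ∫ _ in a..x, Vinf ^ 2 / 2 :=
    integral_mono_on_of_le_Ioo hax hintax intervalIntegrable_const
      fun t ht ↦ h.swirlDensity_le ⟨ha.trans_lt ht.1, ht.2.trans_le hx⟩
  have hadd : (∫ t in a..x, swirlDensity V t) + Hfun V x = Hfun V a :=
    integral_add_adjacent_intervals hintax hintx
  rw [intervalIntegral.integral_const, smul_eq_mul] at hle
  linarith

end IsSwirlProfile

lemma isSwirlProfile_const_mul_id {c : ℝ} (hc : 0 ≤ c) : IsSwirlProfile c fun σ ↦ c * σ where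
  continuousOn := by fun_prop
  concaveOn := (concaveOn_id (convex_Ico 0 1)).smul hc
  monotoneOn := fun _ _ _ _ hxy ↦ mul_le_mul_of_nonneg_left hxy hc
  map_zero := mul_zero c
  tendsto := by
    simpa using (tendsto_id.mono_left (nhdsWithin_le_nhds (a := (1 : ℝ)))).const_mul c

lemma tendsto_swirlDensity_const_mul_id (c : ℝ) :
    Tendsto (swirlDensity fun σ ↦ c * σ) (𝓝[<] 1) (𝓝 (c ^ 2 / 2)) := by
  have hcont : Continuous fun t : ℝ ↦ (1 - t ^ 2) * Real.log (1 - t ^ 2) :=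
    Real.continuous_mul_log.comp (by fun_prop : Continuous fun t : ℝ ↦ 1 - t ^ 2)
  have hlim : Tendsto (fun t : ℝ ↦ c ^ 2 / 2 * (1 + (1 - t ^ 2) * Real.log (1 - t ^ 2) / t ^ 2))
      (𝓝 1) (𝓝 (c ^ 2 / 2 * (1 + (1 - 1 ^ 2) * Real.log (1 - 1 ^ 2) / 1 ^ 2))) :=
    (((hcont.tendsto 1).div (tendsto_id.pow 2) (by norm_num)).const_add 1).const_mul _
  simp only [one_pow, sub_self, zero_mul, zero_div, add_zero, mul_one] at hlim
  refine (hlim.mono_left nhdsWithin_le_nhds).congr' ?_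
  filter_upwards [Ioo_mem_nhdsLT one_pos] with t ht
  exact (swirlDensity_const_mul_id c ht).symm

lemma IsSwirlProfile.Hfun_le_Hfun {c₁ c₂ : ℝ} {V₁ V₂ : ℝ → ℝ} (h₁ : IsSwirlProfile c₁ V₁)
    (h₂ : IsSwirlProfile c₂ V₂) (h : ∀ σ ∈ Ico (0 : ℝ) 1, V₁ σ ≤ V₂ σ) {x : ℝ}
    (hx : x ∈ Icc (0 : ℝ) 1) : Hfun V₁ x ≤ Hfun V₂ x :=
  integral_mono_on_of_le_Ioo hx.2 (h₁.intervalIntegrable_swirlDensity hx)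
    (h₂.intervalIntegrable_swirlDensity hx) fun _ ht ↦
      have ht' := ⟨hx.1.trans_lt ht.1, ht.2⟩
      swirlDensity_le_swirlDensity h₁.continuousOn h₂.continuousOn ht' fun σ hσ ↦
        have hσ' : σ ∈ Ico (0 : ℝ) 1 := ⟨hσ.1, hσ.2.trans_lt ht'.2⟩
        abs_le_abs_of_nonneg (h₁.nonneg hσ') (h σ hσ')

lemma exists_pos_forall_le_pressureHead {E₀ Vinf : ℝ} (hV : 0 ≤ Vinf)
    (hE : 0 < E₀ + Vinf ^ 2 / 2) :
    ∃ t ∈ Ioo (0 : ℝ) 1, ∃ δ > 0, ∀ V, IsSwirlProfile Vinf V → δ ≤ pressureHead E₀ V t := by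
  let W : ℝ → ℝ := fun σ ↦ Vinf * σ
  have hW : IsSwirlProfile Vinf W := isSwirlProfile_const_mul_id hV
  have hpos : ∀ᶠ s in 𝓝[<] 1, 0 < E₀ + swirlDensity W s :=
    ((tendsto_swirlDensity_const_mul_id Vinf).const_add E₀).eventually_const_lt hE
  obtain ⟨s, hs, hs'⟩ := (mem_nhdsLT_iff_exists_mem_Ico_Ioo_subset one_pos).1 hpos
  have hmid : (s + 1) / 2 ∈ Ioo s 1 := ⟨by linarith [hs.2], by linarith [hs.2]⟩
  have hmid0 := hs.1.trans_lt hmid.1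
  have hanti : StrictAntiOn (pressureHead E₀ W) (Icc ((s + 1) / 2) 1) := by
    refine strictAntiOn_of_deriv_neg (convex_Icc _ _)
      (hW.continuousOn_pressureHead.mono (Icc_subset_Icc_left hmid0.le)) fun x hx ↦ ?_
    rw [interior_Icc] at hx
    rw [(hW.hasDerivAt_pressureHead ⟨hmid0.trans hx.1, hx.2⟩).deriv, neg_lt_zero, add_comm]
    exact hs' ⟨hmid.1.trans hx.1, hx.2⟩
  refine ⟨(s + 1) / 2, ⟨hmid0, hmid.2⟩, pressureHead E₀ W ((s + 1) / 2), ?_, fun V h ↦ ?_⟩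
  · simpa using hanti (left_mem_Icc.2 hmid.2.le) (right_mem_Icc.2 hmid.2.le) hmid.2
  · exact add_le_add_left (hW.Hfun_le_Hfun h (fun σ hσ ↦ h.mul_le hσ) ⟨hmid0.le, hmid.2.le⟩) _

/-! ### Solutions with nonpositive stream function -/

namespace IsNSSolution

variable {ν E₀ Vinf : ℝ} {Θ V : ℝ → ℝ} {x : ℝ}

lemma neg (hs : IsNSSolution ν E₀ Vinf Θ V) : IsNSSolution ν E₀ (-Vinf) Θ (-V) where
  hΘreg := hs.hΘreg
  hVreg := hs.hVreg.neg
  hΘeq := by simpa [Ffun, Hfun] using hs.hΘeq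
  hVeq := by simpa [deriv.neg'] using hs.hVeq
  hΘ0 := hs.hΘ0
  hV0 := by simp [hs.hV0]
  hV1 := hs.hV1.neg

lemma hasDerivAt_Θ (hs : IsNSSolution ν E₀ Vinf Θ V) (hν : 0 < ν) (hx : x ∈ Ioo (0 : ℝ) 1) :
    HasDerivAt Θ ((Θ x ^ 2 / 2 - Ffun E₀ V x) / ν) x := by
  rw [← hs.hΘeq x hx, mul_div_cancel_left₀ _ hν.ne']
  exact ((hs.hΘreg.contDiffAt (Ico_mem_nhds hx.1 hx.2)).differentiableAt one_ne_zero).hasDerivAt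

lemma hasDerivAt_V (hs : IsNSSolution ν E₀ Vinf Θ V) (hx : x ∈ Ioo (0 : ℝ) 1) :
    HasDerivAt V (deriv V x) x :=
  ((hs.hVreg.contDiffAt (Ico_mem_nhds hx.1 hx.2)).differentiableAt two_ne_zero).hasDerivAt

lemma hasDerivAt_deriv_V (hs : IsNSSolution ν E₀ Vinf Θ V) (hν : 0 < ν)
    (hx : x ∈ Ioo (0 : ℝ) 1) : HasDerivAt (deriv V) (Θ x / ν * deriv V x) x := by
  have hreg : ContDiffOn ℝ (1 + 1) V (Ioo 0 1) := hs.hVreg.mono Ioo_subset_Ico_self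
  have hderiv := ((contDiffOn_succ_iff_deriv_of_isOpen isOpen_Ioo).1 hreg).2.2
  rw [div_mul_eq_mul_div, ← hs.hVeq x hx, mul_div_cancel_left₀ _ hν.ne']
  exact ((hderiv.contDiffAt (isOpen_Ioo.mem_nhds hx)).differentiableAt one_ne_zero).hasDerivAt

lemma deriv_V_nonneg (hs : IsNSSolution ν E₀ Vinf Θ V) (hν : 0 < ν) (hV : 0 ≤ Vinf)
    (hx : x ∈ Ioo (0 : ℝ) 1) : 0 ≤ deriv V x := by
  have hhalf : (1 / 2 : ℝ) ∈ Ioo (0 : ℝ) 1 := by norm_num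
  obtain ⟨c, hc⟩ := exists_eq_mul_exp_of_hasDerivAt isOpen_Ioo isPreconnected_Ioo
    (fun x hx ↦ (hasDerivAt_integral_of_continuousOn_Ioo
      (hs.hΘreg.continuousOn.mono Ioo_subset_Ico_self) hhalf hx).div_const ν)
    (fun x hx ↦ hs.hasDerivAt_deriv_V hν hx)
  rw [hc x hx]
  refine mul_nonneg (le_of_not_gt fun hc0 ↦ hV.not_gt ?_) (Real.exp_pos _).le
  have hanti : StrictAntiOn V (Ico 0 1) := by
    refine strictAntiOn_of_deriv_neg (convex_Ico 0 1) hs.hVreg.continuousOn fun z hz ↦ ?_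
    rw [interior_Ico] at hz
    exact hc z hz ▸ mul_neg_of_neg_of_pos hc0 (Real.exp_pos _)
  have hneg : V (1 / 2) < 0 :=
    hs.hV0 ▸ hanti (left_mem_Ico.2 one_pos) (Ioo_subset_Ico_self hhalf) hhalf.1
  refine (le_of_tendsto hs.hV1 ?_).trans_lt hneg
  filter_upwards [Ico_mem_nhdsLT hhalf.2] with z hz
  exact hanti.antitoneOn (Ioo_subset_Ico_self hhalf) ⟨hhalf.1.le.trans hz.1, hz.2⟩ hz.1

lemma isSwirlProfile (hs : IsNSSolution ν E₀ Vinf Θ V) (hν : 0 < ν) (hV : 0 ≤ Vinf)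
    (hΘ : ∀ x ∈ Ioo (0 : ℝ) 1, Θ x ≤ 0) : IsSwirlProfile Vinf V where
  continuousOn := hs.hVreg.continuousOn
  concaveOn := by
    refine concaveOn_of_hasDerivWithinAt2_nonpos (convex_Ico 0 1) hs.hVreg.continuousOn
      (f' := deriv V) (f'' := fun x ↦ Θ x / ν * deriv V x) ?_ ?_ ?_ <;>
      rw [interior_Ico] <;> intro x hx
    · exact (hs.hasDerivAt_V hx).hasDerivWithinAt
    · exact (hs.hasDerivAt_deriv_V hν hx).hasDerivWithinAt
    · exact mul_nonpos_of_nonpos_of_nonneg (div_nonpos_of_nonpos_of_nonneg (hΘ x hx) hν.le)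
        (hs.deriv_V_nonneg hν hV hx)
  monotoneOn := by
    refine monotoneOn_of_deriv_nonneg (convex_Ico 0 1) hs.hVreg.continuousOn ?_ ?_ <;>
      rw [interior_Ico] <;> intro x hx
    · exact (hs.hasDerivAt_V hx).differentiableAt.differentiableWithinAt
    · exact hs.deriv_V_nonneg hν hV hx
  map_zero := hs.hV0
  tendsto := hs.hV1

lemma pressureHead_zero_nonneg (hs : IsNSSolution ν E₀ Vinf Θ V) (hν : 0 < ν)
    (h : IsSwirlProfile Vinf V) (hΘ : ∀ x ∈ Ioo (0 : ℝ) 1, Θ x ≤ 0) :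
    0 ≤ pressureHead E₀ V 0 := by
  by_contra! hneg
  have hcont : ContinuousWithinAt (pressureHead E₀ V) (Ici 0) 0 :=
    (h.continuousOn_pressureHead 0 (left_mem_Icc.2 zero_le_one)).mono_of_mem_nhdsWithin
      (Icc_mem_nhdsGE one_pos)
  obtain ⟨r, hr, hr'⟩ := (mem_nhdsGE_iff_exists_mem_Ioc_Ico_subset one_pos).1
    (hcont.eventually_lt_const hneg)
  have hmono : StrictMonoOn Θ (Ico 0 r) := by
    refine strictMonoOn_of_deriv_pos (convex_Ico _ _)
      (hs.hΘreg.continuousOn.mono (Ico_subset_Ico_right hr.2)) fun x hx ↦ ?_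
    rw [interior_Ico] at hx
    have hx1 : x ∈ Ioo (0 : ℝ) 1 := ⟨hx.1, hx.2.trans_le hr.2⟩
    have hF : Ffun E₀ V x < 0 := mul_neg_of_pos_of_neg
      (div_pos hx.1 (pow_pos (one_sub_sq_pos (Ioo_subset_Ico_self hx1)) 2))
      (hr' (Ioo_subset_Ico_self hx))
    rw [(hs.hasDerivAt_Θ hν hx1).deriv]
    have := sq_nonneg (Θ x)
    exact div_pos (by linarith) hν
  have hmid : r / 2 ∈ Ioo 0 r := ⟨half_pos hr.1, half_lt_self hr.1⟩
  have hpos := hmono (left_mem_Ico.2 hr.1) (Ioo_subset_Ico_self hmid) hmid.1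
  rw [hs.hΘ0] at hpos
  exact hpos.not_ge (hΘ _ ⟨hmid.1, hmid.2.trans_le hr.2⟩)

lemma neg_le_Θ {b N : ℝ} (hs : IsNSSolution ν E₀ Vinf Θ V) (hν : 0 < ν) (hb : b < 1) (hN : 0 < N)
    (hF : ∀ x ∈ Ioo 0 b, Ffun E₀ V x < N ^ 2 / 2) (hx : x ∈ Icc 0 b) : -N ≤ Θ x := by
  have hsub : Icc 0 b ⊆ Ico (0 : ℝ) 1 := Icc_subset_Ico_right hb
  have hder : ∀ y ∈ Ico 0 b, HasDerivWithinAt (-Θ) (-derivWithin Θ (Ico 0 1) y) (Ici y) y :=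
    fun y hy ↦
      have hy' := hsub (Ico_subset_Icc_self hy)
      ((hs.hΘreg.differentiableOn one_ne_zero y hy').hasDerivWithinAt.mono_of_mem_nhdsWithin
        (mem_of_superset (Ico_mem_nhdsGE hy'.2) (Ico_subset_Ico_left hy'.1))).neg
  refine neg_le.1 (image_le_of_deriv_right_lt_deriv_boundary'
    (hs.hΘreg.continuousOn.neg.mono hsub) hder (B := fun _ ↦ N) (B' := fun _ ↦ 0)
    (by simpa [hs.hΘ0] using hN.le) continuousOn_const
    (fun _ _ ↦ hasDerivWithinAt_const ..) (fun y hy hyN ↦ ?_) hx)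
  rcases hy.1.eq_or_lt with rfl | hy0
  · exact absurd (by simpa [hs.hΘ0] using hyN) hN.ne
  · have hder := hs.hasDerivAt_Θ hν ⟨hy0, hy.2.trans hb⟩
    rw [derivWithin_of_mem_nhds (Ico_mem_nhds hy0 (hy.2.trans hb)), hder.deriv, neg_lt_zero,
      ← neg_sq, show -Θ y = N from hyN]
    exact div_pos (sub_pos.2 (hF y ⟨hy0, hy.2⟩)) hν

end IsNSSolution

lemma Ffun_const (E₀ c : ℝ) {x : ℝ} (hx : x ∈ Icc (0 : ℝ) 1) :
    Ffun E₀ (fun _ ↦ c) x = x / (1 - x ^ 2) ^ 2 * ((c ^ 2 / 2 + E₀) * (1 - x)) := by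
  rw [Ffun, Hfun_const c hx, add_mul]

lemma continuousOn_Ffun_const (E₀ c : ℝ) : ContinuousOn (Ffun E₀ fun _ ↦ c) (Ico 0 1) := by
  refine ContinuousOn.congr ?_ fun x hx ↦ Ffun_const E₀ c (Ico_subset_Icc_self hx)
  exact (continuousOn_id.div (by fun_prop) fun x hx ↦ (pow_pos (one_sub_sq_pos hx) 2).ne').mul
    (by fun_prop)

lemma Ffun_congr_ae (E₀ : ℝ) {V W : ℝ → ℝ} (h : ∀ᵐ y ∂volume.restrict (Ioo (0 : ℝ) 1), V y = W y)
    {x : ℝ} (hx : x ∈ Icc (0 : ℝ) 1) : Ffun E₀ V x = Ffun E₀ W x := by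
  rw [restrict_Ioo_eq_restrict_Ioc, ae_restrict_iff' measurableSet_Ioc] at h
  have hH : Hfun V x = Hfun W x := by
    refine integral_congr_ae (.of_forall fun t ht ↦ congrArg _ (integral_congr_ae ?_))
    rw [uIoc_of_le hx.2] at ht
    filter_upwards [h] with σ hσ hσt
    rw [uIoc_of_le (hx.1.trans ht.1.le)] at hσt
    rw [hσ ⟨hσt.1, hσt.2.trans ht.2⟩]
  rw [Ffun, Ffun, hH]

namespace IsSwirlProfile

variable {E₀ Vinf : ℝ} {V : ℝ → ℝ} {x : ℝ}

lemma Ffun_le_Ffun_const (h : IsSwirlProfile Vinf V) (hx : x ∈ Ico (0 : ℝ) 1) :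
    Ffun E₀ V x ≤ Ffun E₀ (fun _ ↦ Vinf) x := by
  have := hx.1
  have hx' := Ico_subset_Icc_self hx
  refine mul_le_mul_of_nonneg_left ?_ (by positivity)
  rw [Hfun_const Vinf hx']
  linarith [h.Hfun_le hx']

lemma Ffun_const_sub_Ffun_le {a b : ℝ} (h : IsSwirlProfile Vinf V) (ha : 0 ≤ a) (hb : b < 1)
    (hx : x ∈ Icc a b) : Ffun E₀ (fun _ ↦ Vinf) x - Ffun E₀ V x ≤
      (Vinf ^ 2 / 2 * (1 - a) - Hfun V a) / (1 - b ^ 2) ^ 2 := by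
  have hx0 := ha.trans hx.1
  have hx1 := hx.2.trans_lt hb
  have hb' := one_sub_sq_pos ⟨hx0.trans hx.2, hb⟩
  have hsq : 1 - b ^ 2 ≤ 1 - x ^ 2 := sub_le_sub_left (pow_le_pow_left₀ hx0 hx.2 2) 1
  have hweight : x / (1 - x ^ 2) ^ 2 ≤ 1 / (1 - b ^ 2) ^ 2 :=
    div_le_div₀ zero_le_one hx1.le (by positivity) (pow_le_pow_left₀ hb'.le hsq 2)
  have hgap := h.const_mul_sub_Hfun_le ha hx.1 hx1.le
  have hgap0 := sub_nonneg.2 (h.Hfun_le ⟨hx0, hx1.le⟩)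
  calc Ffun E₀ (fun _ ↦ Vinf) x - Ffun E₀ V x
      = x / (1 - x ^ 2) ^ 2 * (Vinf ^ 2 / 2 * (1 - x) - Hfun V x) := by
        rw [Ffun_const E₀ Vinf ⟨hx0, hx1.le⟩, Ffun]; ring
    _ ≤ 1 / (1 - b ^ 2) ^ 2 * (Vinf ^ 2 / 2 * (1 - a) - Hfun V a) :=
        mul_le_mul hweight hgap hgap0 (by positivity)
    _ = _ := one_div_mul_eq_div _ _

lemma le_Ffun {t : ℝ} (h : IsSwirlProfile Vinf V) (h0 : 0 ≤ pressureHead E₀ V 0)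
    (ht : t ∈ Ioo (0 : ℝ) 1) (hpos : 0 ≤ pressureHead E₀ V t) (hx : x ∈ Ico (0 : ℝ) 1) :
    x ^ 2 * (1 - x) * pressureHead E₀ V t ≤ Ffun E₀ V x := by
  have hx0 := hx.1
  have hx1 := one_sub_sq_pos hx
  have hhead := mul_one_sub_mul_le_of_concaveOn h.concaveOn_pressureHead h0
    (pressureHead_one E₀ V).ge ht hpos (Ico_subset_Icc_self hx)
  have hweight : x ≤ x / (1 - x ^ 2) ^ 2 :=
    le_div_self hx0 (by positivity) (pow_le_one₀ hx1.le (sub_le_self 1 (sq_nonneg x)))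
  have hxx : 0 ≤ x * (1 - x) := mul_nonneg hx0 (sub_nonneg.2 hx.2.le)
  calc x ^ 2 * (1 - x) * pressureHead E₀ V t = x * (x * (1 - x) * pressureHead E₀ V t) := by ring
    _ ≤ Ffun E₀ V x := mul_le_mul hweight hhead (mul_nonneg hxx hpos) (by positivity)

lemma tendsto_swirlDensity {ι : Type*} {l : Filter ι} [l.IsCountablyGenerated] {W : ι → ℝ → ℝ}
    (h : ∀ i, IsSwirlProfile Vinf (W i))
    (hW : ∀ σ ∈ Ioo (0 : ℝ) 1, Tendsto (W · σ) l (𝓝 Vinf)) (hx : x ∈ Ioo (0 : ℝ) 1) :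
    Tendsto (fun i ↦ swirlDensity (W i) x) l (𝓝 (Vinf ^ 2 / 2)) := by
  have hx' := Ioo_subset_Ico_self hx
  have hmem : ∀ σ ∈ uIoc 0 x, σ ∈ Ioo (0 : ℝ) 1 := fun σ hσ ↦ by
    rw [uIoc_of_le hx.1.le] at hσ
    exact ⟨hσ.1, hσ.2.trans_lt hx.2⟩
  rw [← swirlDensity_const Vinf hx]
  refine (intervalIntegral.tendsto_integral_filter_of_dominated_convergence
    (fun σ ↦ σ / (1 - σ ^ 2) ^ 2 * Vinf ^ 2)
    (.of_forall fun i ↦ ?_) (.of_forall fun i ↦ .of_forall fun σ hσ ↦ ?_)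
    (intervalIntegrable_kernel_mul_sq continuousOn_const hx')
    (.of_forall fun σ hσ ↦ ((hW σ (hmem σ hσ)).pow 2).const_mul _)).const_mul _
  · exact (intervalIntegrable_kernel_mul_sq (h i).continuousOn hx').def'.aestronglyMeasurable
  · have hσ' := Ioo_subset_Ico_self (hmem σ hσ)
    have := hσ'.1
    rw [Real.norm_of_nonneg (by positivity)]
    exact mul_le_mul_of_nonneg_left
      (pow_le_pow_left₀ ((h i).nonneg hσ') ((h i).le hσ') 2) (by positivity)

lemma tendsto_Hfun {ι : Type*} {l : Filter ι} [l.IsCountablyGenerated] {W : ι → ℝ → ℝ}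
    (h : ∀ i, IsSwirlProfile Vinf (W i))
    (hW : ∀ σ ∈ Ioo (0 : ℝ) 1, Tendsto (W · σ) l (𝓝 Vinf)) (hx : x ∈ Icc (0 : ℝ) 1) :
    Tendsto (fun i ↦ Hfun (W i) x) l (𝓝 (Vinf ^ 2 / 2 * (1 - x))) := by
  have hae : ∀ {p : ℝ → Prop}, (∀ t ∈ Ioo (0 : ℝ) 1, p t) → ∀ᵐ t, t ∈ uIoc x 1 → p t :=
    fun hp ↦ by
      filter_upwards [Measure.ae_ne volume 1] with t ht1 ht
      rw [uIoc_of_le hx.2] at ht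
      exact hp t ⟨hx.1.trans_lt ht.1, ht.2.lt_of_ne ht1⟩
  have hlim := intervalIntegral.tendsto_integral_filter_of_dominated_convergence
    (f := fun _ ↦ Vinf ^ 2 / 2) (F := fun i ↦ swirlDensity (W i)) (fun _ ↦ Vinf ^ 2 / 2)
    (.of_forall fun i ↦ ((h i).intervalIntegrable_swirlDensity hx).def'.aestronglyMeasurable)
    (.of_forall fun i ↦ hae fun t ht ↦ ?_) intervalIntegrable_const
    (hae fun t ht ↦ tendsto_swirlDensity h hW ht)
  · rwa [intervalIntegral.integral_const, smul_eq_mul, mul_comm] at hlim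
  · rw [Real.norm_of_nonneg (swirlDensity_nonneg _ ht)]
    exact (h i).swirlDensity_le ht

end IsSwirlProfile

lemma exists_forall_neg_le_Θ (E₀ Vinf : ℝ) {b : ℝ} (hb : b < 1) :
    ∃ N > 0, ∀ ν Θ V, 0 < ν → IsNSSolution ν E₀ Vinf Θ V → IsSwirlProfile Vinf V →
      ∀ x ∈ Icc 0 b, -N ≤ Θ x := by
  obtain ⟨K, hK⟩ := isCompact_Icc.exists_bound_of_continuousOn
    ((continuousOn_Ffun_const E₀ Vinf).mono (Icc_subset_Ico_right hb))
  refine ⟨|K| + 1, by positivity, fun ν Θ V hν hs h x hx ↦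
    hs.neg_le_Θ hν hb (by positivity) (fun y hy ↦ ?_) hx⟩
  have hy' := Ioo_subset_Icc_self hy
  calc Ffun E₀ V y ≤ Ffun E₀ (fun _ ↦ Vinf) y := h.Ffun_le_Ffun_const ⟨hy.1.le, hy.2.trans hb⟩
    _ ≤ |K| := (le_abs_self _).trans ((hK y hy').trans (le_abs_self K))
    _ < (|K| + 1) ^ 2 / 2 := by linarith [sq_nonneg |K|, add_sq |K| 1]

lemma exists_pos_forall_le_Ffun {E₀ Vinf a b : ℝ} (hV : 0 ≤ Vinf) (hE : 0 < E₀ + Vinf ^ 2 / 2)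
    (ha : 0 < a) (hb : b < 1) :
    ∃ c > 0, ∀ ν Θ V, 0 < ν → IsNSSolution ν E₀ Vinf Θ V → (∀ x ∈ Ioo (0 : ℝ) 1, Θ x ≤ 0) →
      ∀ x ∈ Icc a b, c ≤ Ffun E₀ V x := by
  obtain ⟨t, ht, δ, hδ, hhead⟩ := exists_pos_forall_le_pressureHead hV hE
  refine ⟨a ^ 2 * (1 - b) * δ, by have := sub_pos.2 hb; positivity, fun ν Θ V hν hs hΘ x hx ↦ ?_⟩
  have h := hs.isSwirlProfile hν hV hΘ
  have hx1 := hx.2.trans_lt hb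
  have hδ' := hhead V h
  calc a ^ 2 * (1 - b) * δ ≤ x ^ 2 * (1 - x) * pressureHead E₀ V t := by
        have := sub_nonneg.2 hx1.le
        have := sub_nonneg.2 hb.le
        gcongr
        exacts [hx.1, hx.2]
    _ ≤ Ffun E₀ V x := h.le_Ffun (hs.pressureHead_zero_nonneg hν h hΘ) ht (hδ.le.trans hδ')
        ⟨ha.le.trans hx.1, hx1⟩

namespace IsNSSolution

variable {ν E₀ Vinf a b c N : ℝ} {Θ V : ℝ → ℝ}

/- The logarithmic derivative of `V' exp (Θ / N)` is `(Θ + Θ² / (2 N) - F / N) / ν`, and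
`Θ + Θ² / (2 N) ≤ 0` as long as `-N ≤ Θ ≤ 0`: the weight turns the lower bound on `F` into an
exponential decay rate of order `1 / ν`, although `Θ` itself need not be bounded away from `0`. -/
lemma deriv_V_mul_exp_le (hs : IsNSSolution ν E₀ Vinf Θ V) (hν : 0 < ν) (hV : 0 ≤ Vinf)
    (ha : 0 < a) (hab : a ≤ b) (hb : b < 1) (hN : 0 < N)
    (hΘ : ∀ x ∈ Icc a b, -N ≤ Θ x ∧ Θ x ≤ 0) (hF : ∀ x ∈ Icc a b, c ≤ Ffun E₀ V x) :
    deriv V b * Real.exp (Θ b / N) ≤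
      deriv V a * Real.exp (Θ a / N) * Real.exp (-(c / (N * ν)) * (b - a)) := by
  have hsub : Icc a b ⊆ Ioo 0 1 := Icc_subset_Ioo ha hb
  have hder : ∀ x ∈ Icc a b, HasDerivAt (fun x ↦ deriv V x * Real.exp (Θ x / N))
      ((Θ x + (Θ x ^ 2 / 2 - Ffun E₀ V x) / N) / ν * (deriv V x * Real.exp (Θ x / N))) x := by
    intro x hx
    convert! (hs.hasDerivAt_deriv_V hν (hsub hx)).fun_mul
      ((hs.hasDerivAt_Θ hν (hsub hx)).div_const N).exp using 1
    ring
  have hrate : ∀ x ∈ Icc a b,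
      (Θ x + (Θ x ^ 2 / 2 - Ffun E₀ V x) / N) / ν ≤ -(c / (N * ν)) := by
    intro x hx
    obtain ⟨hΘN, hΘ0⟩ := hΘ x hx
    rw [← div_div, ← neg_div]
    refine div_le_div_of_nonneg_right ?_ hν.le
    rw [add_div' _ _ _ hN.ne', ← neg_div]
    refine div_le_div_of_nonneg_right ?_ hN.le
    nlinarith [hF x hx]
  rw [← gronwallBound_ε0]
  refine le_gronwallBound_of_hasDerivAt_le hab hder fun x hx ↦ ?_
  rw [add_zero]
  exact mul_le_mul_of_nonneg_right (hrate x hx)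
    (mul_nonneg (hs.deriv_V_nonneg hν hV (hsub hx)) (Real.exp_pos _).le)

lemma deriv_V_le_mul_exp (hs : IsNSSolution ν E₀ Vinf Θ V) (hν : 0 < ν) (hV : 0 ≤ Vinf)
    (ha : 0 < a) (hab : a ≤ b) (hb : b < 1) (hN : 0 < N)
    (hΘ : ∀ x ∈ Icc a b, -N ≤ Θ x ∧ Θ x ≤ 0) (hF : ∀ x ∈ Icc a b, c ≤ Ffun E₀ V x) :
    deriv V b ≤ deriv V a * (Real.exp 1 * Real.exp (-(c * (b - a) / N) / ν)) := by
  have hVa := hs.deriv_V_nonneg hν hV ⟨ha, hab.trans_lt hb⟩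
  have hVb := hs.deriv_V_nonneg hν hV ⟨ha.trans_le hab, hb⟩
  have hexpa : Real.exp (Θ a / N) ≤ 1 := Real.exp_le_one_iff.2
    (div_nonpos_of_nonpos_of_nonneg (hΘ a (left_mem_Icc.2 hab)).2 hN.le)
  have hexpb : Real.exp (-1) ≤ Real.exp (Θ b / N) := by
    rw [Real.exp_le_exp, le_div_iff₀ hN, neg_one_mul]
    exact (hΘ b (right_mem_Icc.2 hab)).1
  calc deriv V b = deriv V b * Real.exp (-1) * Real.exp 1 := by
        rw [mul_assoc, ← Real.exp_add, neg_add_cancel, Real.exp_zero, mul_one]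
    _ ≤ deriv V b * Real.exp (Θ b / N) * Real.exp 1 := by gcongr
    _ ≤ deriv V a * Real.exp (Θ a / N) * Real.exp (-(c / (N * ν)) * (b - a)) * Real.exp 1 := by
        exact mul_le_mul_of_nonneg_right (hs.deriv_V_mul_exp_le hν hV ha hab hb hN hΘ hF)
          (Real.exp_pos 1).le
    _ ≤ deriv V a * 1 * Real.exp (-(c / (N * ν)) * (b - a)) * Real.exp 1 := by gcongr
    _ = _ := by
        rw [mul_one, mul_assoc, mul_comm (Real.exp _)]
        congr 3
        field_simp

end IsNSSolution

/-! ### Relaxation to the Euler solution -/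

/-- The negative stream function of the stationary self-similar Euler solution with constant swirl
`Vinf`. -/
noncomputable def eulerTheta (E₀ Vinf x : ℝ) : ℝ :=
  -√(Vinf ^ 2 + 2 * E₀) * √(x * (1 - x)) / (1 - x ^ 2)

section EulerTheta

variable {E₀ Vinf x : ℝ}

lemma eulerTheta_neg (hE : 0 < E₀ + Vinf ^ 2 / 2) (hx : x ∈ Ioo (0 : ℝ) 1) :
    eulerTheta E₀ Vinf x < 0 := by
  have hx1 := one_sub_sq_pos (Ioo_subset_Ico_self hx)
  have hE' : 0 < Vinf ^ 2 + 2 * E₀ := by linarith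
  have hxx : 0 < x * (1 - x) := mul_pos hx.1 (sub_pos.2 hx.2)
  rw [eulerTheta, neg_mul, neg_div, neg_lt_zero]
  positivity

lemma eulerTheta_sq_div_two (hE : 0 ≤ E₀ + Vinf ^ 2 / 2) (hx : x ∈ Ico (0 : ℝ) 1) :
    eulerTheta E₀ Vinf x ^ 2 / 2 = Ffun E₀ (fun _ ↦ Vinf) x := by
  have hE' : 0 ≤ Vinf ^ 2 + 2 * E₀ := by linarith
  have hxx : 0 ≤ x * (1 - x) := mul_nonneg hx.1 (sub_nonneg.2 hx.2.le)
  rw [Ffun_const E₀ Vinf (Ico_subset_Icc_self hx), eulerTheta, div_pow, mul_pow, neg_sq,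
    Real.sq_sqrt hE', Real.sq_sqrt hxx]
  ring

lemma contDiffOn_eulerTheta (E₀ Vinf : ℝ) : ContDiffOn ℝ 1 (eulerTheta E₀ Vinf) (Ioo 0 1) := by
  refine ContDiffOn.div (contDiffOn_const.mul (ContDiffOn.sqrt (by fun_prop) fun x hx ↦ ?_))
    (by fun_prop) fun x hx ↦ (one_sub_sq_pos (Ioo_subset_Ico_self hx)).ne'
  exact (mul_pos hx.1 (sub_pos.2 hx.2)).ne'

lemma hasDerivAt_eulerTheta (hx : x ∈ Ioo (0 : ℝ) 1) :
    HasDerivAt (eulerTheta E₀ Vinf) (deriv (eulerTheta E₀ Vinf) x) x :=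
  (((contDiffOn_eulerTheta E₀ Vinf).contDiffAt (isOpen_Ioo.mem_nhds hx)).differentiableAt
    one_ne_zero).hasDerivAt

lemma exists_eulerTheta_le_neg_two_mul {a b : ℝ} (hE : 0 < E₀ + Vinf ^ 2 / 2) (ha : 0 < a)
    (hab : a ≤ b) (hb : b < 1) : ∃ m > 0, ∀ x ∈ Icc a b, eulerTheta E₀ Vinf x ≤ -(2 * m) := by
  have hsub : Icc a b ⊆ Ioo 0 1 := Icc_subset_Ioo ha hb
  obtain ⟨z, hz, hmax⟩ := isCompact_Icc.exists_isMaxOn (nonempty_Icc.2 hab)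
    ((contDiffOn_eulerTheta E₀ Vinf).continuousOn.mono hsub)
  refine ⟨-eulerTheta E₀ Vinf z / 2, ?_, fun x hx ↦ ?_⟩
  · linarith [eulerTheta_neg hE (hsub hz)]
  · linarith [isMaxOn_iff.1 hmax x hx]

lemma exists_abs_deriv_eulerTheta_le (E₀ Vinf : ℝ) {a b : ℝ} (ha : 0 < a) (hb : b < 1) :
    ∃ L, ∀ x ∈ Icc a b, |deriv (eulerTheta E₀ Vinf) x| ≤ L :=
  isCompact_Icc.exists_bound_of_continuousOn
    (((contDiffOn_eulerTheta E₀ Vinf).continuousOn_deriv_of_isOpen isOpen_Ioo le_rfl).mono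
      (Icc_subset_Ioo ha hb))

end EulerTheta

lemma IsNSSolution.sq_sub_eulerTheta_le {ν E₀ Vinf a b m L G : ℝ} {Θ V : ℝ → ℝ}
    (hs : IsNSSolution ν E₀ Vinf Θ V) (hν : 0 < ν) (hE : 0 ≤ E₀ + Vinf ^ 2 / 2) (ha : 0 < a)
    (hab : a ≤ b) (hb : b < 1) (hm : 0 < m) (hΘ : ∀ x ∈ Icc a b, Θ x ≤ 0)
    (hΘE : ∀ x ∈ Icc a b, eulerTheta E₀ Vinf x ≤ -(2 * m))
    (hL : ∀ x ∈ Icc a b, |deriv (eulerTheta E₀ Vinf) x| ≤ L)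
    (hG : ∀ x ∈ Icc a b, |Ffun E₀ (fun _ ↦ Vinf) x - Ffun E₀ V x| ≤ G) :
    (Θ b - eulerTheta E₀ Vinf b) ^ 2 ≤
      (Θ a - eulerTheta E₀ Vinf a) ^ 2 * Real.exp (-(m * (b - a)) / ν) +
        ((G + ν * L) / m) ^ 2 := by
  have hsub : Icc a b ⊆ Ioo 0 1 := Icc_subset_Ioo ha hb
  refine sq_le_of_hasDerivAt_relaxation hab hν hm
    (fun x hx ↦ (hs.hasDerivAt_Θ hν (hsub hx)).fun_sub (hasDerivAt_eulerTheta (hsub hx)))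
    fun x hx ↦ ?_
  have hEuler := eulerTheta_sq_div_two hE (Ioo_subset_Ico_self (hsub hx))
  set θ := eulerTheta E₀ Vinf x
  set θ' := deriv (eulerTheta E₀ Vinf) x
  set F := Ffun E₀ V x
  set d := Θ x - θ with hd
  have herror : d * (Ffun E₀ (fun _ ↦ Vinf) x - F - ν * θ') ≤ (G + ν * L) * |d| := by
    refine (le_abs_self _).trans ?_
    rw [abs_mul, mul_comm]
    refine mul_le_mul_of_nonneg_right ((abs_sub _ _).trans ?_) (abs_nonneg d)
    rw [abs_mul, abs_of_pos hν]
    exact add_le_add (hG x hx) (mul_le_mul_of_nonneg_left (hL x hx) hν.le)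
  have hdamp : (Θ x + θ) / 2 * d ^ 2 ≤ -m * d ^ 2 :=
    mul_le_mul_of_nonneg_right (by linarith [hΘ x hx, hΘE x hx]) (sq_nonneg d)
  calc ν * (d * ((Θ x ^ 2 / 2 - F) / ν - θ'))
      = (Θ x + θ) / 2 * d ^ 2 + d * (Ffun E₀ (fun _ ↦ Vinf) x - F - ν * θ') := by
        rw [← hEuler, hd]
        field_simp
        ring
    _ ≤ -m * d ^ 2 + (G + ν * L) * |d| := add_le_add hdamp herror

section Limit

variable {ι : Type*} {l : Filter ι} {E₀ Vinf : ℝ} {ν : ι → ℝ} {Θ V : ι → ℝ → ℝ} {x : ℝ}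

lemma tendsto_swirl_of_nonneg (hV : 0 ≤ Vinf) (hE : 0 < E₀ + Vinf ^ 2 / 2) (hν : ∀ i, 0 < ν i)
    (hν0 : Tendsto ν l (𝓝 0)) (hsol : ∀ i, IsNSSolution (ν i) E₀ Vinf (Θ i) (V i))
    (hΘ : ∀ i, ∀ x ∈ Ioo (0 : ℝ) 1, Θ i x ≤ 0) (hx : x ∈ Ioo (0 : ℝ) 1) :
    Tendsto (V · x) l (𝓝 Vinf) := by
  have hprof i := (hsol i).isSwirlProfile (hν i) hV (hΘ i)
  obtain ⟨a, ha, hax⟩ := exists_between hx.1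
  have ha' : a ∈ Ioo (0 : ℝ) 1 := ⟨ha, hax.trans hx.2⟩
  obtain ⟨N, hN, hΘN⟩ := exists_forall_neg_le_Θ E₀ Vinf hx.2
  obtain ⟨c, hc, hF⟩ := exists_pos_forall_le_Ffun hV hE ha hx.2
  have hbound : ∀ i, Vinf - V i x ≤
      Vinf / a * (Real.exp 1 * Real.exp (-(c * (x - a) / N) / ν i)) := fun i ↦
    calc Vinf - V i x ≤ deriv (V i) x * (1 - x) :=
          (hprof i).sub_le_deriv_mul (Ioo_subset_Ico_self hx) ((hsol i).hasDerivAt_V hx)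
      _ ≤ deriv (V i) x :=
          mul_le_of_le_one_right ((hsol i).deriv_V_nonneg (hν i) hV hx) (sub_le_self 1 hx.1.le)
      _ ≤ deriv (V i) a * (Real.exp 1 * Real.exp (-(c * (x - a) / N) / ν i)) :=
          (hsol i).deriv_V_le_mul_exp (hν i) hV ha hax.le hx.2 hN
            (fun y hy ↦ ⟨hΘN _ _ _ (hν i) (hsol i) (hprof i) y ⟨ha.le.trans hy.1, hy.2⟩,
              hΘ i y ⟨ha.trans_le hy.1, hy.2.trans_lt hx.2⟩⟩) (hF _ _ _ (hν i) (hsol i) (hΘ i))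
      _ ≤ _ := mul_le_mul_of_nonneg_right ((hprof i).deriv_le ha' ((hsol i).hasDerivAt_V ha'))
          (by positivity)
  have hdecay := ((tendsto_exp_neg_div_nhds_zero
    (div_pos (mul_pos hc (sub_pos.2 hax)) hN) hν hν0).const_mul (Real.exp 1)).const_mul (Vinf / a)
  rw [mul_zero, mul_zero] at hdecay
  refine tendsto_of_tendsto_of_tendsto_of_le_of_le (by simpa using hdecay.const_sub Vinf)
    tendsto_const_nhds (fun i ↦ sub_le_comm.1 (hbound i))
    fun i ↦ (hprof i).le (Ioo_subset_Ico_self hx)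

lemma tendsto_stream_of_nonneg [l.IsCountablyGenerated] (hV : 0 ≤ Vinf)
    (hE : 0 < E₀ + Vinf ^ 2 / 2) (hν : ∀ i, 0 < ν i) (hν0 : Tendsto ν l (𝓝 0))
    (hsol : ∀ i, IsNSSolution (ν i) E₀ Vinf (Θ i) (V i))
    (hΘ : ∀ i, ∀ x ∈ Ioo (0 : ℝ) 1, Θ i x ≤ 0) (hx : x ∈ Ioo (0 : ℝ) 1) :
    Tendsto (Θ · x) l (𝓝 (eulerTheta E₀ Vinf x)) := by
  have hprof i := (hsol i).isSwirlProfile (hν i) hV (hΘ i)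
  obtain ⟨a, ha, hax⟩ := exists_between hx.1
  obtain ⟨N, hN, hΘN⟩ := exists_forall_neg_le_Θ E₀ Vinf hx.2
  obtain ⟨m, hm, hΘE⟩ := exists_eulerTheta_le_neg_two_mul hE ha hax.le hx.2
  obtain ⟨L, hL⟩ := exists_abs_deriv_eulerTheta_le E₀ Vinf ha hx.2
  let gap i := (Vinf ^ 2 / 2 * (1 - a) - Hfun (V i) a) / (1 - x ^ 2) ^ 2
  have hgap : Tendsto gap l (𝓝 0) := by
    have hH := IsSwirlProfile.tendsto_Hfun hprof
      (fun σ hσ ↦ tendsto_swirl_of_nonneg hV hE hν hν0 hsol hΘ hσ) ⟨ha.le, (hax.trans hx.2).le⟩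
    convert! (hH.const_sub (Vinf ^ 2 / 2 * (1 - a))).div_const ((1 - x ^ 2) ^ 2) using 2
    rw [sub_self, zero_div]
  have hsq : ∀ i, (Θ i x - eulerTheta E₀ Vinf x) ^ 2 ≤
      (N + |eulerTheta E₀ Vinf a|) ^ 2 * Real.exp (-(m * (x - a)) / ν i) +
        ((gap i + ν i * L) / m) ^ 2 := by
    intro i
    have hΘa : |Θ i a| ≤ N := abs_le.2
      ⟨hΘN _ _ _ (hν i) (hsol i) (hprof i) a ⟨ha.le, hax.le⟩,
        (hΘ i a ⟨ha, hax.trans hx.2⟩).trans hN.le⟩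
    refine ((hsol i).sq_sub_eulerTheta_le (hν i) hE.le ha hax.le hx.2 hm
      (fun y hy ↦ hΘ i y ⟨ha.trans_le hy.1, hy.2.trans_lt hx.2⟩) hΘE hL (fun y hy ↦ ?_)).trans
      (add_le_add_left (mul_le_mul_of_nonneg_right ?_ (Real.exp_pos _).le) _)
    · have hy' : y ∈ Ico (0 : ℝ) 1 := ⟨ha.le.trans hy.1, hy.2.trans_lt hx.2⟩
      rw [abs_of_nonneg (sub_nonneg.2 ((hprof i).Ffun_le_Ffun_const hy'))]
      exact (hprof i).Ffun_const_sub_Ffun_le ha.le hx.2 hy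
    · rw [← sq_abs]
      exact pow_le_pow_left₀ (abs_nonneg _) ((abs_sub _ _).trans (by gcongr)) 2
  have hzero := ((tendsto_exp_neg_div_nhds_zero (mul_pos hm (sub_pos.2 hax)) hν hν0).const_mul
    ((N + |eulerTheta E₀ Vinf a|) ^ 2)).add
      (((hgap.add (hν0.mul_const L)).div_const m).pow 2)
  have hlim := (squeeze_zero (fun i ↦ sq_nonneg _) hsq (by simpa using hzero)).sqrt
  simp only [Real.sqrt_sq_eq_abs, Real.sqrt_zero] at hlim
  exact tendsto_sub_nhds_zero_iff.1 ((tendsto_zero_iff_abs_tendsto_zero _).2 hlim)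

theorem zero_viscosity_limit_strong_general [l.IsCountablyGenerated]
    (hE : 0 < E₀ + Vinf ^ 2 / 2) (hν : ∀ i, 0 < ν i) (hν0 : Tendsto ν l (𝓝 0))
    (hsol : ∀ i, IsNSSolution (ν i) E₀ Vinf (Θ i) (V i))
    (hΘ : ∀ i, ∀ x ∈ Ioo (0 : ℝ) 1, Θ i x ≤ 0) (hx : x ∈ Ioo (0 : ℝ) 1) :
    Tendsto (V · x) l (𝓝 Vinf) ∧ Tendsto (Θ · x) l (𝓝 (eulerTheta E₀ Vinf x)) := by
  rcases le_total 0 Vinf with hV | hV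
  · exact ⟨tendsto_swirl_of_nonneg hV hE hν hν0 hsol hΘ hx,
      tendsto_stream_of_nonneg hV hE hν hν0 hsol hΘ hx⟩
  · have hV' : 0 ≤ -Vinf := neg_nonneg.2 hV
    have hE' : 0 < E₀ + (-Vinf) ^ 2 / 2 := by rwa [neg_sq]
    have hsol' i := (hsol i).neg
    refine ⟨?_, ?_⟩
    · simpa using (tendsto_swirl_of_nonneg hV' hE' hν hν0 hsol' hΘ hx).neg
    · simpa only [eulerTheta, neg_sq] using
        tendsto_stream_of_nonneg hV' hE' hν hν0 hsol' hΘ hx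

end Limit

/-- Zero-viscosity limit (strong form): if in addition the solutions `(Θ_ν, V_ν)` converge
almost everywhere along a sequence `ν_k → 0`, then the limit is the explicit stationary
self-similar Euler solution with negative stream function: almost everywhere on `(0,1)`,
`V = V∞`, `Θ(x) = −√(V∞²+2E₀) √(x(1−x))/(1−x²) < 0`, and `Θ²/2 = F(V;x)`. -/
theorem zero_viscosity_limit_strong (E₀ Vinf : ℝ) (hVinf : 0 < Vinf)
    (hE : 0 < E₀ + Vinf ^ 2 / 2)
    (Θ V : ℝ → ℝ → ℝ)
    (hsol : ∀ ν : ℝ, 0 < ν → IsNSSolution ν E₀ Vinf (Θ ν) (V ν))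
    (hB : ∀ ν : ℝ, 0 < ν → BoundB E₀ Vinf (Θ ν))
    (νk : ℕ → ℝ) (hνk : ∀ k, 0 < νk k) (hνk0 : Tendsto νk atTop (nhds 0))
    (Θl Vl : ℝ → ℝ)
    (hΘconv : ∀ᵐ x ∂(volume.restrict (Set.Ioo (0 : ℝ) 1)),
      Tendsto (fun k => Θ (νk k) x) atTop (nhds (Θl x)))
    (hVconv : ∀ᵐ x ∂(volume.restrict (Set.Ioo (0 : ℝ) 1)),
      Tendsto (fun k => V (νk k) x) atTop (nhds (Vl x))) :
    ∀ᵐ x ∂(volume.restrict (Set.Ioo (0 : ℝ) 1)),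
      Vl x = Vinf ∧
      Θl x = -Real.sqrt (Vinf ^ 2 + 2 * E₀) * Real.sqrt (x * (1 - x)) / (1 - x ^ 2) ∧
      Θl x < 0 ∧
      Θl x ^ 2 / 2 = Ffun E₀ Vl x := by
  have hlim {x : ℝ} := zero_viscosity_limit_strong_general (x := x) hE hνk hνk0
    (fun k ↦ hsol _ (hνk k)) fun k y hy ↦ (hB _ (hνk k) y hy).2.le
  have hmem := ae_restrict_mem (μ := volume) (measurableSet_Ioo (a := (0 : ℝ)) (b := 1))
  have hVl : ∀ᵐ x ∂volume.restrict (Ioo (0 : ℝ) 1), Vl x = Vinf := by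
    filter_upwards [hVconv, hmem] with x hVx hx
    exact tendsto_nhds_unique hVx (hlim hx).1
  filter_upwards [hVl, hΘconv, hmem] with x hVx hΘx hx
  have hΘl : Θl x = eulerTheta E₀ Vinf x := tendsto_nhds_unique hΘx (hlim hx).2
  refine ⟨hVx, hΘl, hΘl ▸ eulerTheta_neg hE hx, ?_⟩
  rw [hΘl, eulerTheta_sq_div_two hE.le (Ioo_subset_Ico_self hx),
    Ffun_congr_ae E₀ hVl (Ioo_subset_Icc_self hx)]
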